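/- Let d ≥ 2, let A : ℝ^d → ℝ^d be smooth and bounded, and suppose that the magnetic tensor B_{jk} := ∂_j A_k − ∂_k A_j is not identically zero. Fix s ≥ 0 and set A_s(y) := e^{s/2} A(e^{s/2} y) and l_s[ψ] := ∫_{ℝ^d} |∇ψ(y) − iA_s(y)ψ(y)|² dy − ((d−2)/2)² ∫_{ℝ^d} |ψ(y)|²/|y|² dy + (1/16) ∫_{ℝ^d} |y|² |ψ(y)|² dy. Then the infimum of l_s[ψ] / ∫_{ℝ^d} |ψ|² dy over all nonzero ψ ∈ C_c^∞(ℝ^d, ℂ) is strictly greater than 1/2. -/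

import Mathlib

open MeasureTheory Real

/-- The quadratic form `l_s[ψ]` of the operator `(−i∇ − A_s)² − c_d/|y|² + |y|²/16`
with the singularly scaled potential `A_s(y) := e^{s/2} A(e^{s/2} y)`. -/
noncomputable def lsForm (d : ℕ)
    (A : EuclideanSpace ℝ (Fin d) → EuclideanSpace ℝ (Fin d)) (s : ℝ)
    (ψ : EuclideanSpace ℝ (Fin d) → ℂ) : ℝ :=
  (∫ y, ∑ j, ‖fderiv ℝ ψ y (EuclideanSpace.single j (1:ℝ))
      - Complex.I * (Real.exp (s/2) * A (Real.exp (s/2) • y) j : ℝ) * ψ y‖ ^ 2)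
  - ((d - 2 : ℝ)/2)^2 * (∫ y, ‖ψ y‖^2 / ‖y‖^2)
  + (1/16 : ℝ) * ∫ y, ‖y‖^2 * ‖ψ y‖^2

/-!
Write `a = (d - 2) / 2`. Without magnetic field the ground state is `r ^ (-a) * exp (-r² / 8)`, with
energy exactly `1 / 2`. Let `φ` be this function with `r²` regularised to `r² + δ` in the power, and
write `ψ = φ f`. The ground state representation bounds the form minus `‖ψ‖² / 2` from below by
`∫ φ² |(∇ - iA) f|²`, up to an error vanishing as `δ → 0`, so it suffices to prove
`ε ∫ φ² |f|² ≤ ∫ φ² |(∇ - iA) f|²` with `ε > 0` independent of `δ`.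

The curl of the current `J = Im (f̄ (∇ - iA) f)` is `-B |f|²` plus a term quadratic in `(∇ - iA) f`.
Integrating the divergence of `|f|² X + χ (J_v w - J_w v)` therefore bounds
`∫ (div X + χ B(v, w)) |f|²` by terms that each contain a factor `(∇ - iA) f`. It remains to choose
multipliers `X` and `χ` of size `O(φ²)` with `div X + χ B(v, w) ≥ φ²`. A radial field
`φ² k(r²) y` does this outside a shell; on the shell a concentrated Gaussian field pointing towards
a point `p` with `B(v, w) > 0` takes over, except near `p` itself, where a bump function `χ` helps.
-/

open scoped InnerProductSpace

section Divergence

variable {E : Type*} [NormedAddCommGroup E] [NormedSpace ℝ E]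

/-- The divergence of a vector field, as the trace of its Fréchet derivative. -/
noncomputable def divergence (X : E → E) (x : E) : ℝ :=
  LinearMap.trace ℝ E (fderiv ℝ X x)

theorem divergence_add {X Y : E → E} {x : E} (hX : DifferentiableAt ℝ X x)
    (hY : DifferentiableAt ℝ Y x) :
    divergence (fun y ↦ X y + Y y) x = divergence X x + divergence Y x := by
  simp [divergence, fderiv_fun_add hX hY]

theorem divergence_const_smul {X : E → E} {x : E} (hX : DifferentiableAt ℝ X x) (c : ℝ) :
    divergence (fun y ↦ c • X y) x = c * divergence X x := by
  simp [divergence, fderiv_fun_const_smul hX]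

theorem divergence_sub {X Y : E → E} {x : E} (hX : DifferentiableAt ℝ X x)
    (hY : DifferentiableAt ℝ Y x) :
    divergence (fun y ↦ X y - Y y) x = divergence X x - divergence Y x := by
  simp [divergence, fderiv_fun_sub hX hY]

theorem hasCompactSupport_divergence {X : E → E} (hX : HasCompactSupport X) :
    HasCompactSupport (divergence X) :=
  (hX.fderiv ℝ).comp_left (g := fun L : E →L[ℝ] E ↦ LinearMap.trace ℝ E L) (map_zero _)

variable [FiniteDimensional ℝ E]

theorem divergence_smul {g : E → ℝ} {X : E → E} {x : E} (hg : DifferentiableAt ℝ g x)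
    (hX : DifferentiableAt ℝ X x) :
    divergence (fun y ↦ g y • X y) x = g x * divergence X x + fderiv ℝ g x (X x) := by
  simp [divergence, fderiv_fun_smul hg hX, LinearMap.trace_smulRight]

theorem divergence_smul_const {g : E → ℝ} {x : E} (hg : DifferentiableAt ℝ g x) (u : E) :
    divergence (fun y ↦ g y • u) x = fderiv ℝ g x u := by
  rw [divergence_smul hg (differentiableAt_const u)]
  simp [divergence]

theorem continuous_divergence {X : E → E} (hX : ContDiff ℝ 1 X) : Continuous (divergence X) :=
  (LinearMap.trace ℝ E ∘ₗ ContinuousLinearMap.coeLM ℝ).continuous_of_finiteDimensional.comp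
    (hX.continuous_fderiv one_ne_zero)

variable [MeasurableSpace E] [BorelSpace E] {μ : Measure E} [μ.IsAddHaarMeasure]

theorem integral_fderiv_apply_eq_zero {f : E → ℝ} (hf : ContDiff ℝ 1 f)
    (hfc : HasCompactSupport f) (v : E) : ∫ x, fderiv ℝ f x v ∂μ = 0 := by
  have hint : Integrable (fun x ↦ fderiv ℝ f x v) μ :=
    ((hf.continuous_fderiv one_ne_zero).clm_apply continuous_const).integrable_of_hasCompactSupport
      (hfc.fderiv_apply ℝ v)
  simpa using integral_mul_fderiv_eq_neg_fderiv_mul_of_integrable (μ := μ)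
    (f := fun _ : E ↦ (1 : ℝ)) (g := f) (v := v) (by simp) (by simpa using hint)
    (by simpa using hf.continuous.integrable_of_hasCompactSupport hfc)
    (fun _ _ ↦ differentiableAt_const _) (fun x _ ↦ hf.differentiable one_ne_zero x)

theorem integral_divergence_eq_zero {X : E → E} (hX : ContDiff ℝ 1 X)
    (hXc : HasCompactSupport X) : ∫ x, divergence X x ∂μ = 0 := by
  let b := Module.finBasis ℝ E
  let c i := (b.coord i).toContinuousLinearMap
  have hc i : ContDiff ℝ 1 (c i ∘ X) := (c i).contDiff.comp hX
  have hcc i : HasCompactSupport (c i ∘ X) := hXc.comp_left (map_zero (c i))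
  have hdiv x : divergence X x = ∑ i, fderiv ℝ (c i ∘ X) x (b i) := by
    rw [divergence, LinearMap.trace_eq_matrix_trace ℝ b, Matrix.trace]
    refine Finset.sum_congr rfl fun i _ ↦ ?_
    rw [((c i).hasFDerivAt.comp x (hX.differentiable one_ne_zero x).hasFDerivAt).fderiv]
    simp [LinearMap.toMatrix_apply, c]
  simp only [hdiv]
  rw [integral_finsetSum _ fun i _ ↦ ?_]
  · exact Finset.sum_eq_zero fun i _ ↦ integral_fderiv_apply_eq_zero (hc i) (hcc i) (b i)
  · exact (((hc i).continuous_fderiv one_ne_zero).clm_apply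
      continuous_const).integrable_of_hasCompactSupport ((hcc i).fderiv_apply ℝ (b i))

end Divergence

section FrobeniusSq

variable {ι E F : Type*} [Fintype ι] [NormedAddCommGroup E] [InnerProductSpace ℝ E]

/-- The squared Frobenius (Hilbert–Schmidt) norm of a linear map, computed in an orthonormal
basis. -/
noncomputable def frobeniusSq [NormedAddCommGroup F] [NormedSpace ℝ F] (b : OrthonormalBasis ι ℝ E)
    (L : E →L[ℝ] F) : ℝ :=
  ∑ i, ‖L (b i)‖ ^ 2

theorem frobeniusSq_nonneg [NormedAddCommGroup F] [NormedSpace ℝ F] (b : OrthonormalBasis ι ℝ E)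
    (L : E →L[ℝ] F) : 0 ≤ frobeniusSq b L :=
  Finset.sum_nonneg fun _ _ ↦ sq_nonneg _

theorem frobeniusSq_smul [NormedAddCommGroup F] [NormedSpace ℝ F] (b : OrthonormalBasis ι ℝ E)
    (c : ℝ) (L : E →L[ℝ] F) : frobeniusSq b (c • L) = c ^ 2 * frobeniusSq b L := by
  simp [frobeniusSq, norm_smul, mul_pow, Finset.mul_sum]

theorem norm_apply_le_mul_sqrt_frobeniusSq [NormedAddCommGroup F] [NormedSpace ℝ F]
    (b : OrthonormalBasis ι ℝ E) (L : E →L[ℝ] F) (v : E) :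
    ‖L v‖ ≤ ‖v‖ * √(frobeniusSq b L) := by
  calc ‖L v‖ = ‖∑ i, ⟪b i, v⟫_ℝ • L (b i)‖ := by
        conv_lhs => rw [← b.sum_repr' v, map_sum]
        simp only [map_smul]
    _ ≤ ∑ i, |⟪b i, v⟫_ℝ| * ‖L (b i)‖ :=
        (norm_sum_le _ _).trans_eq (by simp only [norm_smul, Real.norm_eq_abs])
    _ ≤ √(∑ i, |⟪b i, v⟫_ℝ| ^ 2) * √(∑ i, ‖L (b i)‖ ^ 2) :=
        Real.sum_mul_le_sqrt_mul_sqrt _ _ _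
    _ = ‖v‖ * √(frobeniusSq b L) := by
        simp only [sq_abs, b.sum_sq_inner_right, Real.sqrt_sq (norm_nonneg v), frobeniusSq]

theorem frobeniusSq_add_smulRight [NormedAddCommGroup F] [InnerProductSpace ℝ F]
    (b : OrthonormalBasis ι ℝ E) (L : E →L[ℝ] F) (g : E) (z : F) :
    frobeniusSq b (L + (innerSL ℝ g).smulRight z)
      = frobeniusSq b L + 2 * ⟪z, L g⟫_ℝ + ‖g‖ ^ 2 * ‖z‖ ^ 2 := by
  have hL : L g = ∑ i, ⟪b i, g⟫_ℝ • L (b i) := by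
    conv_lhs => rw [← b.sum_repr' g, map_sum]
    simp only [map_smul]
  have hterm i : ‖(L + (innerSL ℝ g).smulRight z) (b i)‖ ^ 2
      = ‖L (b i)‖ ^ 2 + 2 * ⟪z, ⟪b i, g⟫_ℝ • L (b i)⟫_ℝ + ⟪b i, g⟫_ℝ ^ 2 * ‖z‖ ^ 2 := by
    simp only [add_apply, ContinuousLinearMap.smulRight_apply,
      innerSL_apply_apply, norm_add_sq_real, norm_smul, real_inner_smul_right, Real.norm_eq_abs,
      mul_pow, sq_abs, real_inner_comm (b i) g, real_inner_comm z]
  simp only [frobeniusSq, hterm, Finset.sum_add_distrib, ← Finset.mul_sum, ← Finset.sum_mul,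
    ← inner_sum, ← hL, b.sum_sq_inner_right]

end FrobeniusSq

section Magnetic

variable {E : Type*} [NormedAddCommGroup E] [InnerProductSpace ℝ E]

/-- The magnetic derivative `(∇ - iA) f` at a point, as a real-linear map on directions. -/
noncomputable def magneticDeriv (A : E → E) (f : E → ℂ) (x : E) : E →L[ℝ] ℂ :=
  fderiv ℝ f x - (innerSL ℝ (A x)).smulRight (Complex.I * f x)

/-- The magnetic tensor of the potential `A` at `x`, i.e. the exterior derivative of the one-form
`⟪A, ·⟫`, evaluated on two directions. -/
noncomputable def magneticTensor (A : E → E) (x v w : E) : ℝ :=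
  ⟪fderiv ℝ A x v, w⟫_ℝ - ⟪fderiv ℝ A x w, v⟫_ℝ

/-- The probability current `Im (f̄ (∇ - iA) f)` in the direction `w`. -/
noncomputable def magneticCurrent (A : E → E) (f : E → ℂ) (w x : E) : ℝ :=
  ⟪Complex.I * f x, magneticDeriv A f x w⟫_ℝ

theorem magneticTensor_swap (A : E → E) (x v w : E) :
    magneticTensor A x v w = -magneticTensor A x w v :=
  (neg_sub _ _).symm

theorem magneticDeriv_apply (A : E → E) (f : E → ℂ) (x v : E) :
    magneticDeriv A f x v = fderiv ℝ f x v - ⟪A x, v⟫_ℝ • (Complex.I * f x) := by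
  simp [magneticDeriv]

theorem inner_self_I_mul (z : ℂ) : ⟪z, Complex.I * z⟫_ℝ = 0 := by
  simp [Complex.inner, mul_comm]

theorem inner_I_mul_I_mul (z w : ℂ) : ⟪Complex.I * z, Complex.I * w⟫_ℝ = ⟪z, w⟫_ℝ := by
  simp [Complex.inner, mul_comm]

theorem inner_I_mul_left (z w : ℂ) : ⟪Complex.I * z, w⟫_ℝ = -⟪Complex.I * w, z⟫_ℝ := by
  simp [Complex.inner, mul_comm]

variable {A : E → E} {f : E → ℂ} {x : E}

theorem hasCompactSupport_norm_sq {α : Type*} [TopologicalSpace α] {f : α → ℂ}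
    (hfc : HasCompactSupport f) : HasCompactSupport fun x ↦ ‖f x‖ ^ 2 :=
  hfc.mono fun x hx hfx ↦ hx (by simp [hfx])

theorem magneticDeriv_smul {Φ : E → ℝ} (hΦ : DifferentiableAt ℝ Φ x)
    (hf : DifferentiableAt ℝ f x) :
    magneticDeriv A (fun y ↦ Φ y • f y) x
      = Φ x • magneticDeriv A f x + (fderiv ℝ Φ x).smulRight (f x) := by
  ext v
  simp only [magneticDeriv_apply, fderiv_fun_smul hΦ hf, add_apply, smul_apply,
    ContinuousLinearMap.smulRight_apply, mul_smul_comm]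
  module

theorem fderiv_norm_sq_eq_inner_magneticDeriv (A : E → E) (hf : DifferentiableAt ℝ f x) (v : E) :
    fderiv ℝ (fun y ↦ ‖f y‖ ^ 2) x v = 2 * ⟪f x, magneticDeriv A f x v⟫_ℝ := by
  rw [hf.hasFDerivAt.norm_sq.fderiv, magneticDeriv_apply, inner_sub_right, real_inner_smul_right,
    inner_self_I_mul]
  simp only [smul_apply, ContinuousLinearMap.comp_apply, coe_innerSL_apply, nsmul_eq_mul,
    Nat.cast_ofNat]
  ring

theorem magneticCurrent_eq (A : E → E) (f : E → ℂ) (w x : E) :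
    magneticCurrent A f w x
      = ⟪Complex.I * f x, fderiv ℝ f x w⟫_ℝ - ⟪A x, w⟫_ℝ * ‖f x‖ ^ 2 := by
  rw [magneticCurrent, magneticDeriv_apply, inner_sub_right, real_inner_smul_right,
    inner_I_mul_I_mul, real_inner_self_eq_norm_sq]

theorem abs_magneticCurrent_le {ι : Type*} [Fintype ι] (b : OrthonormalBasis ι ℝ E)
    (A : E → E) (f : E → ℂ) (w x : E) :
    |magneticCurrent A f w x| ≤ ‖w‖ * (‖f x‖ * √(frobeniusSq b (magneticDeriv A f x))) := by
  calc |magneticCurrent A f w x| ≤ ‖Complex.I * f x‖ * ‖magneticDeriv A f x w‖ :=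
        abs_real_inner_le_norm _ _
    _ ≤ ‖f x‖ * (‖w‖ * √(frobeniusSq b (magneticDeriv A f x))) := by
        rw [norm_mul, Complex.norm_I, one_mul]
        gcongr
        exact norm_apply_le_mul_sqrt_frobeniusSq b _ w
    _ = _ := by ring

theorem contDiff_magneticCurrent (hA : ContDiff ℝ 1 A) (hf : ContDiff ℝ 2 f) (w : E) :
    ContDiff ℝ 1 (magneticCurrent A f w) := by
  have hf1 : ContDiff ℝ 1 f := hf.of_le one_le_two
  have hf' : ContDiff ℝ 1 (fun x ↦ fderiv ℝ f x w) :=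
    (hf.fderiv_right (by norm_num)).clm_apply contDiff_const
  simp only [funext (magneticCurrent_eq A f w)]
  exact ((contDiff_const.mul hf1).inner ℝ hf').sub
    ((hA.inner ℝ contDiff_const).mul (hf1.norm_sq ℝ))

theorem continuous_magneticDeriv (hA : Continuous A) (hf : ContDiff ℝ 1 f) :
    Continuous (magneticDeriv A f) := by
  exact (hf.continuous_fderiv one_ne_zero).sub
    (((ContinuousLinearMap.smulRightL ℝ E ℂ).continuous.comp
      ((innerSL ℝ).continuous.comp hA)).clm_apply (continuous_const.mul hf.continuous))

theorem fderiv_magneticCurrent_apply (hA : DifferentiableAt ℝ A x) (hf : ContDiffAt ℝ 2 f x)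
    (v w : E) :
    fderiv ℝ (magneticCurrent A f w) x v
      = ⟪Complex.I * fderiv ℝ f x v, fderiv ℝ f x w⟫_ℝ
        + ⟪Complex.I * f x, fderiv ℝ (fderiv ℝ f) x v w⟫_ℝ
        - ⟪fderiv ℝ A x v, w⟫_ℝ * ‖f x‖ ^ 2 - 2 * ⟪A x, w⟫_ℝ * ⟪f x, fderiv ℝ f x v⟫_ℝ := by
  have h1 := (hf.differentiableAt two_ne_zero).hasFDerivAt
  have h2 : HasFDerivAt (fderiv ℝ f) (fderiv ℝ (fderiv ℝ f) x) x :=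
    ((hf.fderiv_right (m := 1) (by norm_num)).differentiableAt one_ne_zero).hasFDerivAt
  have h := ((h1.const_mul Complex.I).inner ℝ (h2.clm_apply (hasFDerivAt_const w x))).fun_sub
    ((hA.hasFDerivAt.inner ℝ (hasFDerivAt_const w x)).fun_mul h1.norm_sq)
  rw [funext (magneticCurrent_eq A f w), h.fderiv]
  simp only [ContinuousLinearMap.comp_zero, zero_add, sub_apply, add_apply, smul_apply,
    ContinuousLinearMap.comp_apply, ContinuousLinearMap.prod_apply, ContinuousLinearMap.flip_apply,
    fderivInnerCLM_apply, coe_innerSL_apply, zero_apply, inner_zero_right, smul_eq_mul,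
    nsmul_eq_mul, Nat.cast_ofNat]
  ring

theorem fderiv_magneticCurrent_sub (hA : DifferentiableAt ℝ A x) (hf : ContDiffAt ℝ 2 f x)
    (v w : E) :
    fderiv ℝ (magneticCurrent A f w) x v - fderiv ℝ (magneticCurrent A f v) x w
      = 2 * ⟪Complex.I * magneticDeriv A f x v, magneticDeriv A f x w⟫_ℝ
        - magneticTensor A x v w * ‖f x‖ ^ 2 := by
  have hsymm : fderiv ℝ (fderiv ℝ f) x v w = fderiv ℝ (fderiv ℝ f) x w v :=
    (hf.isSymmSndFDerivAt (by simp)).eq v w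
  have hII : Complex.I * (Complex.I * f x) = -f x := by
    rw [← mul_assoc, Complex.I_mul_I, neg_one_mul]
  simp only [fderiv_magneticCurrent_apply hA hf, magneticDeriv_apply, magneticTensor, hsymm,
    mul_sub, mul_smul_comm, hII, inner_sub_left, inner_sub_right, real_inner_smul_left,
    real_inner_smul_right, inner_neg_left, inner_I_mul_I_mul, inner_self_I_mul,
    inner_I_mul_left (fderiv ℝ f x w) (fderiv ℝ f x v), real_inner_comm (f x) (fderiv ℝ f x v)]
  ring

theorem continuous_frobeniusSq_magneticDeriv {ι : Type*} [Fintype ι] (b : OrthonormalBasis ι ℝ E)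
    (hA : Continuous A) (hf : ContDiff ℝ 1 f) :
    Continuous fun x ↦ frobeniusSq b (magneticDeriv A f x) :=
  continuous_finsetSum _ fun _ _ ↦
    ((continuous_magneticDeriv hA hf).clm_apply continuous_const).norm.pow 2

theorem hasCompactSupport_frobeniusSq_magneticDeriv {ι : Type*} [Fintype ι]
    (b : OrthonormalBasis ι ℝ E) (A : E → E) (hfc : HasCompactSupport f) :
    HasCompactSupport fun x ↦ frobeniusSq b (magneticDeriv A f x) := by
  have hsupp : HasCompactSupport (magneticDeriv A f) :=
    (hfc.fderiv ℝ).sub (hfc.mono fun x hx hfx ↦ hx (by ext; simp [hfx]))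
  exact hsupp.comp_left (g := frobeniusSq b) (by simp [frobeniusSq])

/-- The vector field `‖f‖² X + χ (J_v w - J_w v)`, where `J` is the magnetic current of `f`. Its
divergence trades the weight `div X + χ B(v, w)` on `‖f‖²` for terms quadratic in `f` and its
magnetic derivative. -/
noncomputable def virialField (A : E → E) (f : E → ℂ) (X : E → E) (χ : E → ℝ) (v w x : E) : E :=
  ‖f x‖ ^ 2 • X x + ((χ x * magneticCurrent A f v x) • w - (χ x * magneticCurrent A f w x) • v)

theorem contDiff_virialField {X : E → E} {χ : E → ℝ} (hA : ContDiff ℝ 1 A) (hf : ContDiff ℝ 2 f)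
    (hX : ContDiff ℝ 1 X) (hχ : ContDiff ℝ 1 χ) (v w : E) :
    ContDiff ℝ 1 (virialField A f X χ v w) :=
  (((hf.of_le one_le_two).norm_sq ℝ).smul hX).add
    (((hχ.mul (contDiff_magneticCurrent hA hf v)).smul contDiff_const).sub
      ((hχ.mul (contDiff_magneticCurrent hA hf w)).smul contDiff_const))

theorem hasCompactSupport_virialField (hfc : HasCompactSupport f) (A X : E → E) (χ : E → ℝ)
    (v w : E) : HasCompactSupport (virialField A f X χ v w) :=
  hfc.mono fun x hx hfx ↦ hx (by simp [virialField, magneticCurrent, hfx])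

variable [FiniteDimensional ℝ E]

theorem divergence_virialField {X : E → E} {χ : E → ℝ} (hA : ContDiff ℝ 1 A) (hf : ContDiff ℝ 2 f)
    (hX : DifferentiableAt ℝ X x) (hχ : DifferentiableAt ℝ χ x) (v w : E) :
    divergence (virialField A f X χ v w) x
      = (divergence X x + χ x * magneticTensor A x v w) * ‖f x‖ ^ 2
        + 2 * ⟪f x, magneticDeriv A f x (X x)⟫_ℝ
        - 2 * χ x * ⟪Complex.I * magneticDeriv A f x v, magneticDeriv A f x w⟫_ℝ
        + (fderiv ℝ χ x w * magneticCurrent A f v x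
          - fderiv ℝ χ x v * magneticCurrent A f w x) := by
  have hfx : DifferentiableAt ℝ f x := hf.differentiable two_ne_zero x
  have hJ (u : E) : DifferentiableAt ℝ (magneticCurrent A f u) x :=
    (contDiff_magneticCurrent hA hf u).differentiable one_ne_zero x
  have hfX : DifferentiableAt ℝ (fun y ↦ ‖f y‖ ^ 2 • X y) x := (hfx.norm_sq ℝ).smul hX
  have hχJ (u u' : E) : DifferentiableAt ℝ (fun y ↦ (χ y * magneticCurrent A f u y) • u') x :=
    (hχ.mul (hJ u)).smul_const u'
  unfold virialField
  rw [divergence_add hfX ((hχJ v w).fun_sub (hχJ w v)), divergence_sub (hχJ v w) (hχJ w v),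
    divergence_smul (hfx.norm_sq ℝ) hX, fderiv_norm_sq_eq_inner_magneticDeriv A hfx,
    divergence_smul_const (hχ.fun_mul (hJ v)), divergence_smul_const (hχ.fun_mul (hJ w)),
    fderiv_fun_mul hχ (hJ v), fderiv_fun_mul hχ (hJ w)]
  simp only [add_apply, smul_apply, smul_eq_mul]
  linear_combination
    -χ x * fderiv_magneticCurrent_sub (hA.differentiable one_ne_zero x) hf.contDiffAt v w

theorem weight_mul_norm_sq_le {ι : Type*} [Fintype ι] (b : OrthonormalBasis ι ℝ E)
    {X : E → E} {χ : E → ℝ} {v w : E} {M ω : ℝ} (hA : ContDiff ℝ 1 A) (hf : ContDiff ℝ 2 f)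
    (hX : DifferentiableAt ℝ X x) (hχ : DifferentiableAt ℝ χ x) (hω : 0 ≤ ω)
    (hdiv : ω ≤ divergence X x + χ x * magneticTensor A x v w) (hXω : ‖X x‖ ≤ M * ω)
    (hχω : ‖v‖ * ‖w‖ * |χ x| ≤ M * ω) (hχ'ω : ‖v‖ * ‖w‖ * ‖fderiv ℝ χ x‖ ≤ M * ω) :
    ω * ‖f x‖ ^ 2 ≤ divergence (virialField A f X χ v w) x
      + (1 / 2 * (ω * ‖f x‖ ^ 2)
        + (8 * M ^ 2 + 2 * M) * (ω * frobeniusSq b (magneticDeriv A f x))) := by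
  rw [divergence_virialField hA hf hX hχ]
  set D := magneticDeriv A f x
  set r := √(frobeniusSq b D)
  have hr2 : frobeniusSq b D = r ^ 2 := (Real.sq_sqrt (frobeniusSq_nonneg b D)).symm
  have hD (u : E) : ‖D u‖ ≤ ‖u‖ * r := norm_apply_le_mul_sqrt_frobeniusSq b D u
  have : 0 ≤ r := Real.sqrt_nonneg _
  have hdrift : |⟪f x, D (X x)⟫_ℝ| ≤ M * ω * (‖f x‖ * r) :=
    calc |⟪f x, D (X x)⟫_ℝ| ≤ ‖f x‖ * (‖X x‖ * r) :=
          (abs_real_inner_le_norm _ _).trans (by gcongr; exact hD _)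
      _ = ‖X x‖ * (‖f x‖ * r) := by ring
      _ ≤ M * ω * (‖f x‖ * r) := by gcongr
  have hcomm : |χ x * ⟪Complex.I * D v, D w⟫_ℝ| ≤ M * ω * r ^ 2 :=
    calc |χ x * ⟪Complex.I * D v, D w⟫_ℝ| ≤ |χ x| * (‖v‖ * r * (‖w‖ * r)) := by
          rw [abs_mul]
          gcongr
          refine (abs_real_inner_le_norm _ _).trans ?_
          rw [norm_mul, Complex.norm_I, one_mul]
          gcongr <;> exact hD _
      _ = ‖v‖ * ‖w‖ * |χ x| * r ^ 2 := by ring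
      _ ≤ M * ω * r ^ 2 := by gcongr
  have hcutoff (u u' : E) (huu' : ‖u‖ * ‖u'‖ = ‖v‖ * ‖w‖) :
      |fderiv ℝ χ x u * magneticCurrent A f u' x| ≤ M * ω * (‖f x‖ * r) :=
    calc |fderiv ℝ χ x u * magneticCurrent A f u' x|
        ≤ ‖fderiv ℝ χ x‖ * ‖u‖ * (‖u'‖ * (‖f x‖ * r)) := by
          rw [abs_mul]
          gcongr
          exacts [(fderiv ℝ χ x).le_opNorm u, abs_magneticCurrent_le b A f u' x]
      _ = ‖v‖ * ‖w‖ * ‖fderiv ℝ χ x‖ * (‖f x‖ * r) := by rw [← huu']; ring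
      _ ≤ M * ω * (‖f x‖ * r) := by gcongr
  -- Young's inequality `4 M ‖f x‖ r ≤ ‖f x‖² / 2 + 8 M² r²`, weighted by `ω`.
  have hyoung : 0 ≤ ω * (‖f x‖ - 4 * M * r) ^ 2 := by positivity
  have hmain := mul_le_mul_of_nonneg_right hdiv (sq_nonneg ‖f x‖)
  rw [hr2]
  linarith [(abs_le.1 hdrift).1, (abs_le.1 hcomm).2, (abs_le.1 (hcutoff w v (mul_comm _ _))).1,
    (abs_le.1 (hcutoff v w rfl)).2]

theorem integral_weight_mul_norm_sq_le [MeasurableSpace E] [BorelSpace E] {μ : Measure E}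
    [μ.IsAddHaarMeasure] {ι : Type*} [Fintype ι] (b : OrthonormalBasis ι ℝ E) {ω χ : E → ℝ}
    {X : E → E} {v w : E} {M : ℝ} (hA : ContDiff ℝ 1 A) (hf : ContDiff ℝ 2 f)
    (hfc : HasCompactSupport f) (hX : ContDiff ℝ 1 X) (hχ : ContDiff ℝ 1 χ) (hω : Continuous ω)
    (hω0 : ∀ x, 0 ≤ ω x) (hdiv : ∀ x, ω x ≤ divergence X x + χ x * magneticTensor A x v w)
    (hXω : ∀ x, ‖X x‖ ≤ M * ω x) (hχω : ∀ x, ‖v‖ * ‖w‖ * |χ x| ≤ M * ω x)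
    (hχ'ω : ∀ x, ‖v‖ * ‖w‖ * ‖fderiv ℝ χ x‖ ≤ M * ω x) :
    ∫ x, ω x * ‖f x‖ ^ 2 ∂μ
      ≤ (16 * M ^ 2 + 4 * M) * ∫ x, ω x * frobeniusSq b (magneticDeriv A f x) ∂μ := by
  have hY := contDiff_virialField hA hf hX hχ v w
  have hYc := hasCompactSupport_virialField hfc A X χ v w
  have hintY : Integrable (divergence (virialField A f X χ v w)) μ :=
    (continuous_divergence hY).integrable_of_hasCompactSupport (hasCompactSupport_divergence hYc)
  have hintf : Integrable (fun x ↦ ω x * ‖f x‖ ^ 2) μ :=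
    (hω.mul (hf.continuous.norm.pow 2)).integrable_of_hasCompactSupport
      (hasCompactSupport_norm_sq hfc).mul_left
  have hintD : Integrable (fun x ↦ ω x * frobeniusSq b (magneticDeriv A f x)) μ :=
    (hω.mul (continuous_frobeniusSq_magneticDeriv b hA.continuous
      (hf.of_le one_le_two))).integrable_of_hasCompactSupport
        (hasCompactSupport_frobeniusSq_magneticDeriv b A hfc).mul_left
  have hint := (hintf.const_mul (1 / 2)).fun_add (hintD.const_mul (8 * M ^ 2 + 2 * M))
  have hmono : ∫ x, ω x * ‖f x‖ ^ 2 ∂μ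
      ≤ ∫ x, (divergence (virialField A f X χ v w) x + (1 / 2 * (ω x * ‖f x‖ ^ 2)
        + (8 * M ^ 2 + 2 * M) * (ω x * frobeniusSq b (magneticDeriv A f x)))) ∂μ :=
    integral_mono hintf (hintY.add hint) fun x ↦
      weight_mul_norm_sq_le b hA hf (hX.differentiable one_ne_zero x)
        (hχ.differentiable one_ne_zero x) (hω0 x) (hdiv x) (hXω x) (hχω x) (hχ'ω x)
  rw [integral_add hintY hint, integral_add (hintf.const_mul _) (hintD.const_mul _),
    integral_const_mul, integral_const_mul, integral_divergence_eq_zero hY hYc] at hmono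
  linarith

end Magnetic

section GroundStateRepresentation

variable {E : Type*} [NormedAddCommGroup E] [InnerProductSpace ℝ E] [FiniteDimensional ℝ E]
  {ι : Type*} [Fintype ι] {A : E → E} {f : E → ℂ} {Φ : E → ℝ}

theorem contDiff_gradient (hΦ : ContDiff ℝ 2 Φ) : ContDiff ℝ 1 (gradient Φ) :=
  (InnerProductSpace.toDual ℝ E).symm.contDiff.comp (hΦ.fderiv_right (by norm_num))

theorem frobeniusSq_magneticDeriv_smul (b : OrthonormalBasis ι ℝ E) (A : E → E)
    (hΦ : ContDiff ℝ 2 Φ) (hf : ContDiff ℝ 1 f) (x : E) :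
    frobeniusSq b (magneticDeriv A (fun y ↦ Φ y • f y) x)
      = Φ x ^ 2 * frobeniusSq b (magneticDeriv A f x)
        + divergence (fun y ↦ (Φ y * ‖f y‖ ^ 2) • gradient Φ y) x
        - Φ x * divergence (gradient Φ) x * ‖f x‖ ^ 2 := by
  have hΦx : DifferentiableAt ℝ Φ x := hΦ.differentiable two_ne_zero x
  have hfx : DifferentiableAt ℝ f x := hf.differentiable one_ne_zero x
  have hfsq : DifferentiableAt ℝ (fun y ↦ ‖f y‖ ^ 2) x := hfx.norm_sq ℝ
  have hgrad : fderiv ℝ Φ x = innerSL ℝ (gradient Φ x) :=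
    hΦx.hasGradientAt.hasFDerivAt.fderiv
  have hdiv : divergence (fun y ↦ (Φ y * ‖f y‖ ^ 2) • gradient Φ y) x
      = Φ x * ‖f x‖ ^ 2 * divergence (gradient Φ) x
        + (Φ x * (2 * ⟪f x, magneticDeriv A f x (gradient Φ x)⟫_ℝ)
          + ‖f x‖ ^ 2 * ‖gradient Φ x‖ ^ 2) := by
    rw [divergence_smul (hΦx.fun_mul hfsq)
      ((contDiff_gradient hΦ).differentiable one_ne_zero x), fderiv_fun_mul hΦx hfsq]
    simp only [add_apply, smul_apply, smul_eq_mul, fderiv_norm_sq_eq_inner_magneticDeriv A hfx,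
      hgrad, innerSL_apply_apply, real_inner_self_eq_norm_sq]
  rw [magneticDeriv_smul hΦx hfx, hgrad, frobeniusSq_add_smulRight, frobeniusSq_smul, hdiv,
    smul_apply, real_inner_smul_right]
  ring

variable [MeasurableSpace E] [BorelSpace E] {μ : Measure E} [μ.IsAddHaarMeasure]

theorem integral_frobeniusSq_magneticDeriv_smul (b : OrthonormalBasis ι ℝ E)
    (hΦ : ContDiff ℝ 2 Φ) (hA : Continuous A) (hf : ContDiff ℝ 1 f) (hfc : HasCompactSupport f) :
    ∫ x, frobeniusSq b (magneticDeriv A (fun y ↦ Φ y • f y) x) ∂μ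
      = (∫ x, Φ x ^ 2 * frobeniusSq b (magneticDeriv A f x) ∂μ)
        - ∫ x, Φ x * divergence (gradient Φ) x * ‖f x‖ ^ 2 ∂μ := by
  have hfsq := hasCompactSupport_norm_sq hfc
  have hY : ContDiff ℝ 1 fun y ↦ (Φ y * ‖f y‖ ^ 2) • gradient Φ y :=
    ((hΦ.of_le one_le_two).mul (hf.norm_sq ℝ)).smul (contDiff_gradient hΦ)
  have hYc : HasCompactSupport fun y ↦ (Φ y * ‖f y‖ ^ 2) • gradient Φ y :=
    hfsq.mul_left.smul_right
  have hintY : Integrable (divergence fun y ↦ (Φ y * ‖f y‖ ^ 2) • gradient Φ y) μ :=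
    (continuous_divergence hY).integrable_of_hasCompactSupport (hasCompactSupport_divergence hYc)
  have hintD : Integrable (fun x ↦ Φ x ^ 2 * frobeniusSq b (magneticDeriv A f x)) μ :=
    ((hΦ.continuous.pow 2).mul
      (continuous_frobeniusSq_magneticDeriv b hA hf)).integrable_of_hasCompactSupport
        (hasCompactSupport_frobeniusSq_magneticDeriv b A hfc).mul_left
  have hintf : Integrable (fun x ↦ Φ x * divergence (gradient Φ) x * ‖f x‖ ^ 2) μ :=
    ((hΦ.continuous.mul (continuous_divergence (contDiff_gradient hΦ))).mul
      (hf.continuous.norm.pow 2)).integrable_of_hasCompactSupport hfsq.mul_left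
  simp only [frobeniusSq_magneticDeriv_smul b A hΦ hf]
  rw [integral_sub (hintD.fun_add hintY) hintf, integral_add hintD hintY,
    integral_divergence_eq_zero hY hYc, add_zero]

end GroundStateRepresentation

section RadialField

variable {E : Type*} [NormedAddCommGroup E] [InnerProductSpace ℝ E]

theorem norm_sub_sq_le_two_mul (x y : E) : ‖x - y‖ ^ 2 ≤ 2 * ‖x‖ ^ 2 + 2 * ‖y‖ ^ 2 := by
  nlinarith [parallelogram_law_with_norm ℝ x y, mul_self_nonneg ‖x + y‖]

/-- The vector field `k(‖y - p‖²) (y - p)`, radial about `p`; the profile `k` is a function of the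
squared distance, which keeps the field smooth at `p`. -/
def radialField (k : ℝ → ℝ) (p y : E) : E :=
  k (‖y - p‖ ^ 2) • (y - p)

theorem contDiff_comp_norm_sq {n : WithTop ℕ∞} {k : ℝ → ℝ} (hk : ∀ t, 0 ≤ t → ContDiffAt ℝ n k t)
    (p : E) : ContDiff ℝ n fun y ↦ k (‖y - p‖ ^ 2) :=
  contDiff_iff_contDiffAt.2 fun y ↦ (hk _ (sq_nonneg _)).comp y
    ((contDiff_id.sub contDiff_const).norm_sq ℝ).contDiffAt

theorem contDiff_radialField {n : WithTop ℕ∞} {k : ℝ → ℝ} (hk : ∀ t, 0 ≤ t → ContDiffAt ℝ n k t)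
    (p : E) : ContDiff ℝ n (radialField k p) :=
  (contDiff_comp_norm_sq hk p).smul (contDiff_id.sub contDiff_const)

theorem hasFDerivAt_comp_norm_sq {k : ℝ → ℝ} {k' : ℝ} {p y : E}
    (hk : HasDerivAt k k' (‖y - p‖ ^ 2)) :
    HasFDerivAt (fun z ↦ k (‖z - p‖ ^ 2)) (innerSL ℝ ((2 * k') • (y - p))) y := by
  refine (hk.comp_hasFDerivAt y ((hasFDerivAt_id y).sub_const p).norm_sq).congr_fderiv ?_
  ext u
  simp only [id_eq, ContinuousLinearMap.comp_id, smul_apply, coe_innerSL_apply, map_smul,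
    nsmul_eq_mul, Nat.cast_ofNat, smul_eq_mul]
  ring

theorem gradient_comp_norm_sq [CompleteSpace E] {k k' : ℝ → ℝ}
    (hk : ∀ t, 0 ≤ t → HasDerivAt k (k' t) t) (p : E) :
    gradient (fun y ↦ k (‖y - p‖ ^ 2)) = radialField (fun t ↦ 2 * k' t) p := by
  ext1 y
  exact HasGradientAt.gradient (hasFDerivAt_comp_norm_sq (hk _ (sq_nonneg _)))

theorem divergence_radialField [FiniteDimensional ℝ E] {k : ℝ → ℝ} {k' : ℝ} {p y : E}
    (hk : HasDerivAt k k' (‖y - p‖ ^ 2)) :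
    divergence (radialField k p) y
      = Module.finrank ℝ E * k (‖y - p‖ ^ 2) + 2 * ‖y - p‖ ^ 2 * k' := by
  have hsub : divergence (fun z ↦ z - p) y = Module.finrank ℝ E := by
    rw [divergence, fderiv_sub_const, fderiv_fun_id]
    exact LinearMap.trace_id ℝ E
  have hk' := hasFDerivAt_comp_norm_sq hk
  unfold radialField
  rw [divergence_smul hk'.differentiableAt (by fun_prop), hsub, hk'.fderiv,
    innerSL_apply_apply, real_inner_smul_left, real_inner_self_eq_norm_sq]
  ring

end RadialField

section GroundProfile

/-- The ground state `r ^ (-a) * exp (-r² / 8)` of `-Δ - a² / r² + r² / 16` in dimension `2 a + 2`,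
as a function of `t = r²` and with the singularity at the origin regularised by `δ`. -/
noncomputable def groundProfile (a δ t : ℝ) : ℝ :=
  (t + δ) ^ (-(a / 2)) * exp (-(t / 8))

variable {a δ t : ℝ}

theorem groundProfile_pos (hδ : 0 < δ) (ht : 0 ≤ t) : 0 < groundProfile a δ t :=
  mul_pos (rpow_pos_of_pos (by positivity) _) (exp_pos _)

theorem contDiffAt_groundProfile (hδ : 0 < δ) (ht : 0 ≤ t) {n : WithTop ℕ∞} :
    ContDiffAt ℝ n (groundProfile a δ) t :=
  ((contDiffAt_id.add contDiffAt_const).rpow_const_of_ne (by positivity)).mul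
    (contDiffAt_id.div_const 8).neg.exp

theorem hasDerivAt_groundProfile (a : ℝ) (hδ : 0 < δ) (ht : 0 ≤ t) :
    HasDerivAt (groundProfile a δ) (-(a / (t + δ) + 1 / 4) / 2 * groundProfile a δ t) t := by
  have htδ : t + δ ≠ 0 := by positivity
  refine ((((hasDerivAt_id t).add_const δ).rpow_const (.inl htδ)).fun_mul
    ((hasDerivAt_id t).div_const 8).fun_neg.exp).congr_deriv ?_
  simp only [id, groundProfile, rpow_sub_one htδ]
  ring

theorem hasDerivAt_groundProfile_sq (a : ℝ) (hδ : 0 < δ) (ht : 0 ≤ t) :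
    HasDerivAt (fun t ↦ groundProfile a δ t ^ 2)
      (-(a / (t + δ) + 1 / 4) * groundProfile a δ t ^ 2) t := by
  refine ((hasDerivAt_groundProfile a hδ ht).fun_pow 2).congr_deriv ?_
  ring

theorem groundProfile_sq (a : ℝ) (hδ : 0 < δ) (ht : 0 ≤ t) :
    groundProfile a δ t ^ 2 = (t + δ) ^ (-a) * exp (-(t / 4)) := by
  rw [groundProfile, mul_pow, ← rpow_mul_natCast (by positivity), ← exp_nat_mul]
  congr 2 <;> push_cast <;> ring

theorem exp_neg_le_groundProfile_sq (ha : 0 ≤ a) (hδ : 0 < δ) (hδ1 : δ ≤ 1) (ht : 0 ≤ t) :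
    exp (-((a + 1) * t)) ≤ groundProfile a δ t ^ 2 := by
  have hrpow : (t + δ) ^ a ≤ exp (a * t) :=
    calc (t + δ) ^ a ≤ exp t ^ a := by
          gcongr
          linarith [add_one_le_exp t]
      _ = exp (a * t) := by rw [← exp_mul, mul_comm]
  calc exp (-((a + 1) * t)) ≤ (exp (a * t))⁻¹ * exp (-(t / 4)) := by
        rw [← exp_neg, ← exp_add]
        gcongr
        linarith
    _ ≤ ((t + δ) ^ a)⁻¹ * exp (-(t / 4)) := by gcongr
    _ = groundProfile a δ t ^ 2 := by rw [groundProfile_sq a hδ ht, rpow_neg (by positivity)]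

theorem groundProfile_sq_le (ha : 0 ≤ a) (hδ : 0 < δ) {t₀ : ℝ} (ht₀ : 0 < t₀) (ht : t₀ ≤ t) :
    groundProfile a δ t ^ 2 ≤ t₀ ^ (-a) := by
  have ht0 : 0 ≤ t := ht₀.le.trans ht
  calc groundProfile a δ t ^ 2 = (t + δ) ^ (-a) * exp (-(t / 4)) := groundProfile_sq a hδ ht0
    _ ≤ t₀ ^ (-a) * 1 := by
        gcongr ?_ * ?_
        · exact rpow_le_rpow_of_nonpos ht₀ (by linarith) (neg_nonpos.2 ha)
        · exact exp_le_one_iff.2 (by linarith)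
    _ = t₀ ^ (-a) := mul_one _

variable {E : Type*} [NormedAddCommGroup E] [InnerProductSpace ℝ E]

theorem contDiff_groundProfile_norm_sq (a : ℝ) (hδ : 0 < δ) {n : WithTop ℕ∞} :
    ContDiff ℝ n fun y : E ↦ groundProfile a δ (‖y‖ ^ 2) := by
  simpa using contDiff_comp_norm_sq (fun t ht ↦ contDiffAt_groundProfile hδ ht) (0 : E)

variable [FiniteDimensional ℝ E]

theorem divergence_gradient_groundProfile (hn : (Module.finrank ℝ E : ℝ) = 2 * a + 2)
    (hδ : 0 < δ) (y : E) :
    divergence (gradient fun z : E ↦ groundProfile a δ (‖z‖ ^ 2)) y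
      = (‖y‖ ^ 2 * ((a / (‖y‖ ^ 2 + δ) + 1 / 4) ^ 2 + 2 * a / (‖y‖ ^ 2 + δ) ^ 2)
        - (2 * a + 2) * (a / (‖y‖ ^ 2 + δ) + 1 / 4)) * groundProfile a δ (‖y‖ ^ 2) := by
  have hgrad : gradient (fun z : E ↦ groundProfile a δ (‖z‖ ^ 2))
      = radialField (fun t ↦ 2 * (-(a / (t + δ) + 1 / 4) / 2 * groundProfile a δ t)) 0 := by
    simpa using gradient_comp_norm_sq (fun t ht ↦ hasDerivAt_groundProfile a hδ ht) (0 : E)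
  have ht : 0 ≤ ‖y - 0‖ ^ 2 := sq_nonneg _
  have htδ : ‖y - 0‖ ^ 2 + δ ≠ 0 := by positivity
  have hm : HasDerivAt (fun t ↦ -(a / (t + δ) + 1 / 4) / 2)
      (a / (‖y - 0‖ ^ 2 + δ) ^ 2 / 2) (‖y - 0‖ ^ 2) := by
    refine (((((hasDerivAt_const _ a).div ((hasDerivAt_id _).add_const δ) htδ).add_const
      (1 / 4)).neg).div_const 2).congr_deriv ?_
    simp only [id_eq, zero_mul, mul_one]
    ring
  rw [hgrad, divergence_radialField ((hm.fun_mul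
    (hasDerivAt_groundProfile a hδ ht)).const_mul 2), hn, sub_zero]
  ring

theorem groundProfile_sq_mul_le_neg_divergence (hn : (Module.finrank ℝ E : ℝ) = 2 * a + 2)
    (ha : 0 ≤ a) (hδ : 0 < δ) (y : E) :
    groundProfile a δ (‖y‖ ^ 2) ^ 2 * (1 / 2 + a ^ 2 / (‖y‖ ^ 2 + δ) - ‖y‖ ^ 2 / 16)
      ≤ -(groundProfile a δ (‖y‖ ^ 2)
        * divergence (gradient fun z : E ↦ groundProfile a δ (‖z‖ ^ 2)) y) := by
  rw [divergence_gradient_groundProfile hn hδ]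
  set t := ‖y‖ ^ 2
  have : 0 ≤ t := sq_nonneg _
  have herr : 0 ≤ groundProfile a δ t ^ 2
      * ((a ^ 2 + 2 * a) * δ / (t + δ) ^ 2 + a * δ / (2 * (t + δ))) := by positivity
  refine le_of_sub_nonneg (herr.trans_eq ?_)
  have htδ : t + δ ≠ 0 := by positivity
  field_simp
  ring

end GroundProfile

section ShellProfile

/-- The profile of the radial field used away from the sphere `r² = 1`: it points outwards near the
origin, inwards at infinity, and `r * shellProfile (r²)` is bounded. -/
noncomputable def shellProfile (t : ℝ) : ℝ :=
  4 * (1 - t) / (1 + t) ^ 2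

variable {a δ σ t : ℝ}

theorem contDiffAt_shellProfile (ht : 0 ≤ t) {n : WithTop ℕ∞} : ContDiffAt ℝ n shellProfile t :=
  (contDiffAt_const.mul (contDiffAt_const.sub contDiffAt_id)).div
    ((contDiffAt_const.add contDiffAt_id).pow 2) (by positivity)

theorem hasDerivAt_shellProfile (ht : 0 ≤ t) :
    HasDerivAt shellProfile (4 * (t - 3) / (1 + t) ^ 3) t := by
  have ht1 : 1 + t ≠ 0 := by positivity
  refine ((((hasDerivAt_id t).const_sub 1).const_mul 4).fun_div
    (((hasDerivAt_id t).const_add 1).fun_pow 2) (pow_ne_zero 2 ht1)).congr_deriv ?_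
  simp only [id]
  field_simp
  ring

theorem abs_shellProfile_mul_le (r : ℝ) : |shellProfile (r ^ 2)| * |r| ≤ 4 := by
  have h1 : |1 - r ^ 2| ≤ 1 + r ^ 2 := abs_le.2 ⟨by linarith, by linarith [sq_nonneg r]⟩
  have h2 : |r| ≤ 1 + r ^ 2 := by nlinarith [sq_nonneg (|r| - 1), sq_abs r, abs_nonneg r]
  rw [shellProfile, abs_div, abs_mul, abs_of_pos (four_pos : (0 : ℝ) < 4), abs_pow,
    abs_of_pos (by positivity : 0 < 1 + r ^ 2), div_mul_eq_mul_div, div_le_iff₀ (by positivity),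
    mul_assoc, sq (1 + r ^ 2)]
  gcongr

/-- The divergence of the radial field with profile `shellProfile` times the squared ground state,
relative to the squared ground state; here `σ = a δ / (t + δ)`. -/
noncomputable def shellDivergence (σ t : ℝ) : ℝ :=
  2 * (1 + σ - t / 4) * shellProfile t + 2 * t * (4 * (t - 3) / (1 + t) ^ 3)

theorem shellDivergence_eq (σ : ℝ) (ht : 0 ≤ t) :
    shellDivergence σ t
      = 8 * ((1 - t ^ 2) * (1 + σ - t / 4) + t ^ 2 - 3 * t) / (1 + t) ^ 3 := by
  have ht1 : 1 + t ≠ 0 := by positivity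
  rw [shellDivergence, shellProfile]
  field_simp
  ring

theorem one_le_shellDivergence (hσ : 0 ≤ σ) (hσa : σ ≤ a) (ht : 0 ≤ t)
    (hshell : t ≤ 1 / 16 ∨ 16 + 8 * a ≤ t) : 1 ≤ shellDivergence σ t := by
  rw [shellDivergence_eq σ ht, le_div_iff₀ (by positivity)]
  rcases hshell with hinner | houter
  · have hσt : 0 ≤ (1 - t ^ 2) * σ := mul_nonneg (by nlinarith) hσ
    nlinarith [mul_nonneg ht ht, mul_nonneg (mul_nonneg ht ht) ht]
  · have hσt : 0 ≤ (t ^ 2 - 1) * (a - σ) := mul_nonneg (by nlinarith) (by linarith)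
    have ht2 : 0 ≤ t ^ 2 * (t - (16 + 8 * a)) := mul_nonneg (sq_nonneg t) (by linarith)
    nlinarith

theorem neg_le_shellDivergence (hσ : 0 ≤ σ) (hσa : σ ≤ a) (ht : 0 ≤ t) :
    -(64 + 24 * a) ≤ shellDivergence σ t := by
  have ha : 0 ≤ a := hσ.trans hσa
  rw [shellDivergence_eq σ ht, le_div_iff₀ (by positivity)]
  have ht2 := mul_nonneg ht ht
  have ht3 := mul_nonneg ht2 ht
  nlinarith [mul_nonneg ha ht, mul_nonneg ha ht2, mul_nonneg ha ht3,
    mul_nonneg ht2 (sub_nonneg.2 hσa)]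

variable {E : Type*} [NormedAddCommGroup E] [InnerProductSpace ℝ E]

/-- The radial field about the origin whose profile is `shellProfile` times the squared ground
state. -/
noncomputable def shellField (a δ : ℝ) (y : E) : E :=
  radialField (fun t ↦ groundProfile a δ t ^ 2 * shellProfile t) 0 y

theorem contDiff_shellField (a : ℝ) (hδ : 0 < δ) {n : WithTop ℕ∞} :
    ContDiff ℝ n (shellField a δ : E → E) :=
  contDiff_radialField (fun _ ht ↦ ((contDiffAt_groundProfile hδ ht).pow 2).mul
    (contDiffAt_shellProfile ht)) 0

theorem norm_shellField_le (a δ : ℝ) (y : E) :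
    ‖shellField a δ y‖ ≤ 4 * groundProfile a δ (‖y‖ ^ 2) ^ 2 := by
  have h := abs_shellProfile_mul_le ‖y‖
  rw [abs_norm] at h
  rw [shellField, radialField, sub_zero, norm_smul, norm_mul, norm_pow, Real.norm_eq_abs,
    Real.norm_eq_abs, sq_abs, mul_assoc, mul_comm (4 : ℝ)]
  gcongr

theorem divergence_shellField [FiniteDimensional ℝ E]
    (hn : (Module.finrank ℝ E : ℝ) = 2 * a + 2) (hδ : 0 < δ) (y : E) :
    divergence (shellField a δ) y
      = groundProfile a δ (‖y‖ ^ 2) ^ 2 * shellDivergence (a * δ / (‖y‖ ^ 2 + δ)) (‖y‖ ^ 2) := by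
  have ht : 0 ≤ ‖y - 0‖ ^ 2 := sq_nonneg _
  have htδ : ‖y‖ ^ 2 + δ ≠ 0 := by positivity
  have hσ : a / (‖y‖ ^ 2 + δ) * ‖y‖ ^ 2 = a - a * δ / (‖y‖ ^ 2 + δ) := by
    field_simp
    ring
  unfold shellField
  rw [divergence_radialField
    ((hasDerivAt_groundProfile_sq a hδ ht).fun_mul (hasDerivAt_shellProfile ht)), hn,
    shellDivergence, sub_zero]
  linear_combination (-2 * groundProfile a δ (‖y‖ ^ 2) ^ 2 * shellProfile (‖y‖ ^ 2)) * hσ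

theorem weight_le_divergence_shellField_add [FiniteDimensional ℝ E]
    (hn : (Module.finrank ℝ E : ℝ) = 2 * a + 2) (ha : 0 ≤ a) (hδ : 0 < δ) {κ : ℝ} (hκ : 0 ≤ κ)
    (p y : E) :
    groundProfile a δ (‖y‖ ^ 2) ^ 2 ≤ divergence (shellField a δ) y
      + (65 + 24 * a) * (1 / 16) ^ (-a) * exp (κ * (2 * (16 + 8 * a) + 2 * ‖p‖ ^ 2))
        * exp (-(κ * ‖y - p‖ ^ 2)) := by
  have hσ0 : 0 ≤ a * δ / (‖y‖ ^ 2 + δ) := by positivity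
  have hσa : a * δ / (‖y‖ ^ 2 + δ) ≤ a := by
    rw [div_le_iff₀ (by positivity)]
    gcongr
    exact le_add_of_nonneg_left (sq_nonneg _)
  have ht : 0 ≤ ‖y‖ ^ 2 := sq_nonneg _
  rw [divergence_shellField hn hδ]
  by_cases hshell : ‖y‖ ^ 2 ≤ 1 / 16 ∨ 16 + 8 * a ≤ ‖y‖ ^ 2
  · exact le_add_of_le_of_nonneg
      (le_mul_of_one_le_right (sq_nonneg _) (one_le_shellDivergence hσ0 hσa ht hshell))
      (by positivity)
  · obtain ⟨hinner, houter⟩ := not_or.1 hshell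
    have hlow := mul_le_mul_of_nonneg_left (neg_le_shellDivergence hσ0 hσa ht)
      (sq_nonneg (groundProfile a δ (‖y‖ ^ 2)))
    have hφ : groundProfile a δ (‖y‖ ^ 2) ^ 2 ≤ (1 / 16) ^ (-a) :=
      groundProfile_sq_le ha hδ (by norm_num) (not_le.1 hinner).le
    have hdist : ‖y - p‖ ^ 2 ≤ 2 * (16 + 8 * a) + 2 * ‖p‖ ^ 2 :=
      (norm_sub_sq_le_two_mul y p).trans (by linarith)
    have hexp : 1 ≤ exp (κ * (2 * (16 + 8 * a) + 2 * ‖p‖ ^ 2)) * exp (-(κ * ‖y - p‖ ^ 2)) := by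
      rw [← exp_add, one_le_exp_iff]
      linarith [mul_le_mul_of_nonneg_left hdist hκ]
    have hgauss := le_mul_of_one_le_right (by positivity : 0 ≤ (65 + 24 * a) * (1 / 16) ^ (-a)) hexp
    have hscale := mul_le_mul_of_nonneg_left hφ (by positivity : 0 ≤ 65 + 24 * a)
    linarith

end ShellProfile

section GaussianField

variable {E : Type*} [NormedAddCommGroup E] [InnerProductSpace ℝ E]

/-- The vector field `-exp (-κ ‖y - p‖²) (y - p)`, whose divergence is positive away from a small
neighbourhood of `p` when `κ` is large. -/
noncomputable def gaussianField (κ : ℝ) (p y : E) : E :=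
  radialField (fun t ↦ -exp (-(κ * t))) p y

theorem contDiff_gaussianField (κ : ℝ) (p : E) {n : WithTop ℕ∞} :
    ContDiff ℝ n (gaussianField κ p) :=
  contDiff_radialField (fun _ _ ↦ (contDiffAt_const.mul contDiffAt_id).neg.exp.neg) p

theorem divergence_gaussianField [FiniteDimensional ℝ E] (κ : ℝ) (p y : E) :
    divergence (gaussianField κ p) y
      = exp (-(κ * ‖y - p‖ ^ 2)) * (2 * κ * ‖y - p‖ ^ 2 - Module.finrank ℝ E) := by
  have hprofile (t : ℝ) :
      HasDerivAt (fun t ↦ -exp (-(κ * t))) (-(exp (-(κ * t)) * -(κ * 1))) t :=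
    ((hasDerivAt_id' t).const_mul κ).fun_neg.exp.fun_neg
  unfold gaussianField
  rw [divergence_radialField (hprofile _)]
  ring

theorem norm_gaussianField_le {c κ : ℝ} (hc : 0 ≤ c) (hκ : 1 + 2 * c ≤ κ) (p y : E) :
    ‖gaussianField κ p y‖ ≤ exp (2 * c * ‖p‖ ^ 2) * exp (-(c * ‖y‖ ^ 2)) := by
  have hdist : ‖y‖ ^ 2 ≤ 2 * ‖y - p‖ ^ 2 + 2 * ‖p‖ ^ 2 := by
    simpa using norm_sub_sq_le_two_mul (y - p) (-p)
  have hnorm : ‖y - p‖ ≤ exp (‖y - p‖ ^ 2) := by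
    nlinarith [add_one_le_exp (‖y - p‖ ^ 2), sq_nonneg (‖y - p‖ - 1)]
  calc ‖gaussianField κ p y‖ = exp (-(κ * ‖y - p‖ ^ 2)) * ‖y - p‖ := by
        rw [gaussianField, radialField, norm_smul, norm_neg, Real.norm_eq_abs, abs_exp]
    _ ≤ exp (-(κ * ‖y - p‖ ^ 2)) * exp (‖y - p‖ ^ 2) := by gcongr
    _ ≤ exp (2 * c * ‖p‖ ^ 2) * exp (-(c * ‖y‖ ^ 2)) := by
        rw [← exp_add, ← exp_add, exp_le_exp]
        linarith [mul_le_mul_of_nonneg_right hκ (sq_nonneg ‖y - p‖),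
          mul_le_mul_of_nonneg_left hdist hc]

theorem exists_exp_le_divergence_gaussianField_add [FiniteDimensional ℝ E] {β : E → ℝ} {p : E}
    (hβ : ContinuousAt β p) (hp : 0 < β p) (κ₀ : ℝ) :
    ∃ κ, κ₀ ≤ κ ∧ ∃ χ : E → ℝ, ContDiff ℝ 1 χ ∧ HasCompactSupport χ ∧
      ∀ y, exp (-(κ * ‖y - p‖ ^ 2)) ≤ divergence (gaussianField κ p) y + χ y * β y := by
  obtain ⟨r, hr, hball⟩ := Metric.eventually_nhds_iff_ball.1
    (hβ.eventually_const_lt (half_lt_self hp))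
  let bump : ContDiffBump p := ⟨r / 2, r, half_pos hr, half_lt_self hr⟩
  set n : ℝ := (Module.finrank ℝ E : ℝ)
  set κ := max κ₀ ((n + 1) / (2 * (r / 2) ^ 2))
  set C := 2 * (n + 1) / β p with hC
  have hn0 : 0 ≤ n := Nat.cast_nonneg _
  have hκ0 : 0 ≤ κ := le_max_of_le_right (by positivity)
  refine ⟨κ, le_max_left _ _, fun y ↦ C * bump y, contDiff_const.mul bump.contDiff,
    bump.hasCompactSupport.mul_left, fun y ↦ ?_⟩
  rw [divergence_gaussianField]
  change _ ≤ _ * (_ - n) + C * bump y * β y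
  by_cases hy : y ∈ Metric.closedBall p (r / 2)
  · have hβy : β p / 2 < β y :=
      hball y (Metric.closedBall_subset_ball (half_lt_self hr) hy)
    have hC' : n + 1 ≤ C * β y :=
      calc n + 1 = C * (β p / 2) := by rw [hC]; field_simp
        _ ≤ C * β y := by gcongr
    have hexp : exp (-(κ * ‖y - p‖ ^ 2)) ≤ 1 := exp_le_one_iff.2 (neg_nonpos.2 (by positivity))
    rw [bump.one_of_mem_closedBall hy]
    nlinarith [exp_pos (-(κ * ‖y - p‖ ^ 2)), mul_nonneg hκ0 (sq_nonneg ‖y - p‖)]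
  · have hfar : n + 1 ≤ 2 * κ * ‖y - p‖ ^ 2 := by
      have hr2 : (r / 2) ^ 2 ≤ ‖y - p‖ ^ 2 := by
        rw [Metric.mem_closedBall, dist_eq_norm, not_le] at hy
        gcongr
      calc n + 1 = 2 * ((n + 1) / (2 * (r / 2) ^ 2)) * (r / 2) ^ 2 := by field_simp
        _ ≤ 2 * κ * ‖y - p‖ ^ 2 := by
          gcongr
          exact le_max_right _ _
    have hbump : 0 ≤ bump y * β y := by
      by_cases hy' : y ∈ Metric.ball p r
      · exact mul_nonneg bump.nonneg (by linarith [hball y hy'])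
      · rw [bump.zero_of_le_dist (not_lt.1 hy'), zero_mul]
    have hC0 : 0 ≤ C := by positivity
    rw [mul_assoc C]
    exact le_add_of_le_of_nonneg (le_mul_of_one_le_right (exp_pos _).le (by linarith))
      (mul_nonneg hC0 hbump)

end GaussianField

section WeightedPoincare

variable {E : Type*} [NormedAddCommGroup E] {a : ℝ}

theorem exists_norm_le_mul_groundProfile_sq {F : Type*} [NormedAddCommGroup F] {g : E → F}
    (ha : 0 ≤ a) (hg : Continuous g) (hgc : HasCompactSupport g) :
    ∃ M, ∀ δ, 0 < δ → δ ≤ 1 → ∀ y, ‖g y‖ ≤ M * groundProfile a δ (‖y‖ ^ 2) ^ 2 := by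
  obtain ⟨M, hM⟩ := (hgc.norm.mul_right (f' := fun y ↦ exp ((a + 1) * ‖y‖ ^ 2))
    ).exists_bound_of_continuous (by fun_prop)
  refine ⟨M, fun δ hδ hδ1 y ↦ ?_⟩
  have hMy : ‖g y‖ * exp ((a + 1) * ‖y‖ ^ 2) ≤ M := (le_abs_self _).trans (hM y)
  have hM0 : 0 ≤ M := le_trans (by positivity) hMy
  calc ‖g y‖ = ‖g y‖ * exp ((a + 1) * ‖y‖ ^ 2) * exp (-((a + 1) * ‖y‖ ^ 2)) := by
        rw [mul_assoc, ← exp_add, add_neg_cancel, exp_zero, mul_one]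
    _ ≤ M * groundProfile a δ (‖y‖ ^ 2) ^ 2 := by
        gcongr
        exact exp_neg_le_groundProfile_sq ha hδ hδ1 (sq_nonneg _)

variable [InnerProductSpace ℝ E]

/-- The multiplier field of the weighted Poincaré inequality: the shell field, corrected by a
multiple of the Gaussian field about `p` on the shell where the former has no positive
divergence. -/
noncomputable def multiplierField (a δ κ K : ℝ) (p y : E) : E :=
  shellField a δ y + K • gaussianField κ p y

theorem contDiff_multiplierField (a κ K : ℝ) {δ : ℝ} (hδ : 0 < δ) (p : E) {n : WithTop ℕ∞} :
    ContDiff ℝ n (multiplierField a δ κ K p) :=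
  (contDiff_shellField a hδ).add (contDiff_const.smul (contDiff_gaussianField κ p))

theorem norm_multiplierField_le {δ κ K : ℝ} (ha : 0 ≤ a) (hδ : 0 < δ) (hδ1 : δ ≤ 1)
    (hκ : 1 + 2 * (a + 1) ≤ κ) (hK : 0 ≤ K) (p y : E) :
    ‖multiplierField a δ κ K p y‖
      ≤ (4 + K * exp (2 * (a + 1) * ‖p‖ ^ 2)) * groundProfile a δ (‖y‖ ^ 2) ^ 2 := by
  have hexp := exp_neg_le_groundProfile_sq ha hδ hδ1 (sq_nonneg ‖y‖)
  calc ‖multiplierField a δ κ K p y‖ ≤ ‖shellField a δ y‖ + K * ‖gaussianField κ p y‖ :=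
        (norm_add_le _ _).trans_eq (by rw [norm_smul, Real.norm_of_nonneg hK])
    _ ≤ 4 * groundProfile a δ (‖y‖ ^ 2) ^ 2
        + K * (exp (2 * (a + 1) * ‖p‖ ^ 2) * groundProfile a δ (‖y‖ ^ 2) ^ 2) := by
        gcongr
        · exact norm_shellField_le a δ y
        · exact (norm_gaussianField_le (by linarith) hκ p y).trans (by gcongr)
    _ = _ := by ring

theorem continuous_magneticTensor {A : E → E} (hA : ContDiff ℝ 1 A) (v w : E) :
    Continuous fun x ↦ magneticTensor A x v w := by
  have hA' := hA.continuous_fderiv one_ne_zero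
  exact ((hA'.clm_apply continuous_const).inner continuous_const).sub
    ((hA'.clm_apply continuous_const).inner continuous_const)

theorem divergence_multiplierField {δ : ℝ} (κ K : ℝ) (hδ : 0 < δ) (p y : E) :
    divergence (multiplierField a δ κ K p) y
      = divergence (shellField a δ) y + K * divergence (gaussianField κ p) y := by
  have hgauss : DifferentiableAt ℝ (gaussianField κ p) y :=
    (contDiff_gaussianField κ p (n := 1)).differentiable one_ne_zero y
  unfold multiplierField
  rw [divergence_add ((contDiff_shellField a hδ (n := 1)).differentiable one_ne_zero y)
    (hgauss.fun_const_smul K), divergence_const_smul hgauss]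

variable [FiniteDimensional ℝ E] {A : E → E} {p v w : E}

theorem exists_weight_le_divergence_multiplierField_add
    (hn : (Module.finrank ℝ E : ℝ) = 2 * a + 2) (ha : 0 ≤ a) (hA : ContDiff ℝ 1 A)
    (hB : 0 < magneticTensor A p v w) :
    ∃ κ, 1 + 2 * (a + 1) ≤ κ ∧ ∃ K, 0 ≤ K ∧ ∃ χ : E → ℝ, ContDiff ℝ 1 χ ∧ HasCompactSupport χ ∧
      ∀ δ, 0 < δ → ∀ y, groundProfile a δ (‖y‖ ^ 2) ^ 2
        ≤ divergence (multiplierField a δ κ K p) y + χ y * magneticTensor A y v w := by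
  obtain ⟨κ, hκ, χ, hχ, hχc, hgauss⟩ := exists_exp_le_divergence_gaussianField_add
    (continuous_magneticTensor hA v w).continuousAt hB (1 + 2 * (a + 1))
  set K := (65 + 24 * a) * (1 / 16) ^ (-a) * exp (κ * (2 * (16 + 8 * a) + 2 * ‖p‖ ^ 2))
  have hK : 0 ≤ K := by positivity
  refine ⟨κ, hκ, K, hK, fun y ↦ K * χ y, contDiff_const.mul hχ, hχc.mul_left, fun δ hδ y ↦ ?_⟩
  have hshell := weight_le_divergence_shellField_add hn ha hδ (by linarith : 0 ≤ κ) p y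
  rw [divergence_multiplierField κ K hδ]
  linarith [mul_le_mul_of_nonneg_left (hgauss y) hK]

theorem exists_weighted_poincare [MeasurableSpace E] [BorelSpace E] (μ : Measure E)
    [μ.IsAddHaarMeasure] {ι : Type*} [Fintype ι] (b : OrthonormalBasis ι ℝ E)
    (hn : (Module.finrank ℝ E : ℝ) = 2 * a + 2) (ha : 0 ≤ a) (hA : ContDiff ℝ 1 A)
    (hB : 0 < magneticTensor A p v w) :
    ∃ ε, 0 < ε ∧ ∀ δ, 0 < δ → δ ≤ 1 → ∀ f : E → ℂ, ContDiff ℝ 2 f → HasCompactSupport f →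
      ε * ∫ x, groundProfile a δ (‖x‖ ^ 2) ^ 2 * ‖f x‖ ^ 2 ∂μ
        ≤ ∫ x, groundProfile a δ (‖x‖ ^ 2) ^ 2 * frobeniusSq b (magneticDeriv A f x) ∂μ := by
  obtain ⟨κ, hκ, K, hK, χ, hχ, hχc, hdiv⟩ :=
    exists_weight_le_divergence_multiplierField_add hn ha hA hB
  obtain ⟨M₁, hM₁⟩ := exists_norm_le_mul_groundProfile_sq ha hχ.continuous hχc
  obtain ⟨M₂, hM₂⟩ := exists_norm_le_mul_groundProfile_sq ha
    (hχ.continuous_fderiv one_ne_zero) (hχc.fderiv ℝ)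
  set M₀ := 4 + K * exp (2 * (a + 1) * ‖p‖ ^ 2)
  set M := max M₀ (max (‖v‖ * ‖w‖ * M₁) (‖v‖ * ‖w‖ * M₂))
  have : 0 ≤ M := le_max_of_le_left (by positivity)
  refine ⟨(16 * M ^ 2 + 4 * M + 1)⁻¹, by positivity, fun δ hδ hδ1 f hf hfc ↦ ?_⟩
  have hω : Continuous fun x : E ↦ groundProfile a δ (‖x‖ ^ 2) ^ 2 :=
    (contDiff_groundProfile_norm_sq a hδ (n := 0)).continuous.pow 2
  have hpoincare := integral_weight_mul_norm_sq_le (μ := μ) b hA hf hfc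
    (contDiff_multiplierField a κ K hδ p) hχ hω (fun _ ↦ sq_nonneg _) (hdiv δ hδ)
    (M := M)
    (fun x ↦ (norm_multiplierField_le ha hδ hδ1 hκ hK p x).trans (by
      gcongr; exact le_max_left _ _))
    (fun x ↦ (mul_le_mul_of_nonneg_left (hM₁ δ hδ hδ1 x) (by positivity)).trans (by
      rw [← mul_assoc]; gcongr; exact le_max_of_le_right (le_max_left _ _)))
    (fun x ↦ (mul_le_mul_of_nonneg_left (hM₂ δ hδ hδ1 x) (by positivity)).trans (by
      rw [← mul_assoc]; gcongr; exact le_max_of_le_right (le_max_right _ _)))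
  have hD : 0 ≤ ∫ x, groundProfile a δ (‖x‖ ^ 2) ^ 2 * frobeniusSq b (magneticDeriv A f x) ∂μ :=
    integral_nonneg fun x ↦ mul_nonneg (sq_nonneg _) (frobeniusSq_nonneg b _)
  rw [inv_mul_le_iff₀ (by positivity)]
  linarith

end WeightedPoincare

section HardyGap

variable {E : Type*} [NormedAddCommGroup E]

theorem mul_integral_div_norm_sq_le_of_forall [MeasurableSpace E] [BorelSpace E] {μ : Measure E}
    [NullSingletonClass μ] {g : E → ℝ} {c C : ℝ} (hg : AEStronglyMeasurable g μ)
    (hg0 : ∀ y, 0 ≤ g y) (hc : 0 ≤ c)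
    (hle : ∀ δ, 0 < δ → δ ≤ 1 → c * ∫ y, g y / (‖y‖ ^ 2 + δ) ∂μ ≤ C) :
    c * ∫ y, g y / ‖y‖ ^ 2 ∂μ ≤ C := by
  by_cases hint : Integrable (fun y ↦ g y / ‖y‖ ^ 2) μ
  · have hne : ∀ᵐ y ∂μ, y ≠ 0 := Measure.ae_ne μ 0
    have hlim : Filter.Tendsto (fun n : ℕ ↦ ∫ y, g y / (‖y‖ ^ 2 + 1 / ((n : ℝ) + 1)) ∂μ)
        Filter.atTop (nhds (∫ y, g y / ‖y‖ ^ 2 ∂μ)) := by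
      refine tendsto_integral_of_dominated_convergence _ (fun n ↦ ?_) hint (fun n ↦ ?_) ?_
      · simp only [div_eq_mul_inv]
        exact hg.mul (by fun_prop)
      · filter_upwards [hne] with y hy
        have : 0 < ‖y‖ := norm_pos_iff.2 hy
        rw [Real.norm_of_nonneg (div_nonneg (hg0 y) (by positivity))]
        gcongr
        exacts [hg0 y, le_add_of_nonneg_right (by positivity)]
      · filter_upwards [hne] with y hy
        refine Filter.Tendsto.div tendsto_const_nhds ?_ (pow_ne_zero 2 (norm_ne_zero_iff.2 hy))
        simpa using tendsto_one_div_add_atTop_nhds_zero_nat.const_add (‖y‖ ^ 2)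
    exact le_of_tendsto' (hlim.const_mul c) fun n ↦ hle _ (by positivity)
      ((div_le_one (by positivity)).2 (le_add_of_nonneg_left n.cast_nonneg))
  · -- The integral of a non-integrable function is `0` by convention.
    rw [integral_undef hint, mul_zero]
    exact (mul_nonneg hc (integral_nonneg fun y ↦ div_nonneg (hg0 y) (by positivity))).trans
      (hle 1 one_pos le_rfl)

variable [InnerProductSpace ℝ E] [FiniteDimensional ℝ E] [MeasurableSpace E] [BorelSpace E]
  {μ : Measure E} [μ.IsAddHaarMeasure] {ι : Type*} [Fintype ι] {a : ℝ} {A : E → E}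

theorem integral_hardy_potential_le (hn : (Module.finrank ℝ E : ℝ) = 2 * a + 2) (ha : 0 ≤ a)
    {δ : ℝ} (hδ : 0 < δ) {f : E → ℂ} (hf : Continuous f) (hfc : HasCompactSupport f) {ψ : E → ℂ}
    (hψ : ψ = fun x ↦ groundProfile a δ (‖x‖ ^ 2) • f x) :
    1 / 2 * ∫ x, ‖ψ x‖ ^ 2 ∂μ + a ^ 2 * ∫ x, ‖ψ x‖ ^ 2 / (‖x‖ ^ 2 + δ) ∂μ
      ≤ 1 / 16 * (∫ x, ‖x‖ ^ 2 * ‖ψ x‖ ^ 2 ∂μ)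
        - ∫ x, groundProfile a δ (‖x‖ ^ 2)
          * divergence (gradient fun z : E ↦ groundProfile a δ (‖z‖ ^ 2)) x * ‖f x‖ ^ 2 ∂μ := by
  have hΦ : ContDiff ℝ 2 fun x : E ↦ groundProfile a δ (‖x‖ ^ 2) :=
    contDiff_groundProfile_norm_sq a hδ
  have hψcont : Continuous fun x ↦ ‖ψ x‖ ^ 2 := by
    rw [hψ]
    exact (hΦ.continuous.smul hf).norm.pow 2
  have hψc : HasCompactSupport fun x ↦ ‖ψ x‖ ^ 2 :=
    hfc.mono fun x hx h ↦ hx (by simp [hψ, h])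
  have hmass : Integrable (fun x ↦ ‖ψ x‖ ^ 2) μ := hψcont.integrable_of_hasCompactSupport hψc
  have hhardy : Integrable (fun x ↦ ‖ψ x‖ ^ 2 / (‖x‖ ^ 2 + δ)) μ :=
    (hψcont.div (by fun_prop) fun x ↦ by positivity).integrable_of_hasCompactSupport
      (hψc.mono fun x hx h ↦ hx (by simp [h]))
  have hharm : Integrable (fun x ↦ ‖x‖ ^ 2 * ‖ψ x‖ ^ 2) μ :=
    ((continuous_norm.pow 2).mul hψcont).integrable_of_hasCompactSupport hψc.mul_left
  have hground : Integrable (fun x ↦ groundProfile a δ (‖x‖ ^ 2)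
      * divergence (gradient fun z : E ↦ groundProfile a δ (‖z‖ ^ 2)) x * ‖f x‖ ^ 2) μ :=
    ((hΦ.continuous.mul (continuous_divergence (contDiff_gradient hΦ))).mul
      (hf.norm.pow 2)).integrable_of_hasCompactSupport (hasCompactSupport_norm_sq hfc).mul_left
  have hmono := integral_mono ((hmass.const_mul (1 / 2)).fun_add (hhardy.const_mul (a ^ 2)))
    ((hharm.const_mul (1 / 16)).sub hground) fun x ↦ by
      have hx := mul_le_mul_of_nonneg_right (groundProfile_sq_mul_le_neg_divergence hn ha hδ x)
        (sq_nonneg ‖f x‖)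
      simp only [Pi.sub_apply, hψ, norm_smul, mul_pow, Real.norm_eq_abs, sq_abs]
      linear_combination hx
  rwa [integral_add (hmass.const_mul _) (hhardy.const_mul _),
    integral_sub' (hharm.const_mul _) hground, integral_const_mul, integral_const_mul,
    integral_const_mul] at hmono

theorem regularized_hardy_gap (b : OrthonormalBasis ι ℝ E)
    (hn : (Module.finrank ℝ E : ℝ) = 2 * a + 2) (ha : 0 ≤ a) (hA : Continuous A) {δ ε : ℝ}
    (hδ : 0 < δ) {f : E → ℂ} (hf : ContDiff ℝ 1 f) (hfc : HasCompactSupport f)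
    (hpoincare : ε * ∫ x, groundProfile a δ (‖x‖ ^ 2) ^ 2 * ‖f x‖ ^ 2 ∂μ
      ≤ ∫ x, groundProfile a δ (‖x‖ ^ 2) ^ 2 * frobeniusSq b (magneticDeriv A f x) ∂μ)
    {ψ : E → ℂ} (hψ : ψ = fun x ↦ groundProfile a δ (‖x‖ ^ 2) • f x) :
    (1 / 2 + ε) * ∫ x, ‖ψ x‖ ^ 2 ∂μ + a ^ 2 * ∫ x, ‖ψ x‖ ^ 2 / (‖x‖ ^ 2 + δ) ∂μ
      ≤ ∫ x, frobeniusSq b (magneticDeriv A ψ x) ∂μ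
        + 1 / 16 * ∫ x, ‖x‖ ^ 2 * ‖ψ x‖ ^ 2 ∂μ := by
  have hΦ : ContDiff ℝ 2 fun x : E ↦ groundProfile a δ (‖x‖ ^ 2) :=
    contDiff_groundProfile_norm_sq a hδ
  have hpotential := integral_hardy_potential_le (μ := μ) hn ha hδ hf.continuous hfc hψ
  have hground := integral_frobeniusSq_magneticDeriv_smul (μ := μ) b hΦ hA hf hfc
  have hmass : ∫ x, ‖ψ x‖ ^ 2 ∂μ = ∫ x, groundProfile a δ (‖x‖ ^ 2) ^ 2 * ‖f x‖ ^ 2 ∂μ := by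
    simp only [hψ, norm_smul, mul_pow, Real.norm_eq_abs, sq_abs]
  rw [← hψ] at hground
  rw [← hmass] at hpoincare
  linarith

theorem exists_magnetic_hardy_gap (μ : Measure E) [μ.IsAddHaarMeasure]
    (b : OrthonormalBasis ι ℝ E) (hn : (Module.finrank ℝ E : ℝ) = 2 * a + 2) (ha : 0 ≤ a)
    (hA : ContDiff ℝ 1 A) {p v w : E} (hB : magneticTensor A p v w ≠ 0) :
    ∃ ε, 0 < ε ∧ ∀ ψ : E → ℂ, ContDiff ℝ 2 ψ → HasCompactSupport ψ →
      (1 / 2 + ε) * ∫ x, ‖ψ x‖ ^ 2 ∂μ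
        ≤ ∫ x, frobeniusSq b (magneticDeriv A ψ x) ∂μ - a ^ 2 * ∫ x, ‖ψ x‖ ^ 2 / ‖x‖ ^ 2 ∂μ
          + 1 / 16 * ∫ x, ‖x‖ ^ 2 * ‖ψ x‖ ^ 2 ∂μ := by
  wlog hpos : 0 < magneticTensor A p v w generalizing v w
  · rw [magneticTensor_swap, neg_ne_zero] at hB
    rw [magneticTensor_swap, neg_pos, not_lt] at hpos
    exact this hB (hpos.lt_of_ne' hB)
  have : Nontrivial E :=
    Module.nontrivial_of_finrank_pos (R := ℝ) (Nat.cast_pos.1 (by linarith : (0 : ℝ) < _))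
  obtain ⟨ε, hε, hpoincare⟩ := exists_weighted_poincare μ b hn ha hA hpos
  refine ⟨ε, hε, fun ψ hψ hψc ↦ ?_⟩
  suffices a ^ 2 * ∫ x, ‖ψ x‖ ^ 2 / ‖x‖ ^ 2 ∂μ
      ≤ ∫ x, frobeniusSq b (magneticDeriv A ψ x) ∂μ + 1 / 16 * ∫ x, ‖x‖ ^ 2 * ‖ψ x‖ ^ 2 ∂μ
        - (1 / 2 + ε) * ∫ x, ‖ψ x‖ ^ 2 ∂μ by linarith
  refine mul_integral_div_norm_sq_le_of_forall (hψ.continuous.norm.pow 2).aestronglyMeasurable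
    (fun x ↦ sq_nonneg _) (sq_nonneg a) fun δ hδ hδ1 ↦ le_sub_iff_add_le'.2 ?_
  have hφ (x : E) : groundProfile a δ (‖x‖ ^ 2) ≠ 0 := (groundProfile_pos hδ (sq_nonneg _)).ne'
  have hf : ContDiff ℝ 2 fun x ↦ (groundProfile a δ (‖x‖ ^ 2))⁻¹ • ψ x :=
    ((contDiff_groundProfile_norm_sq a hδ).inv hφ).smul hψ
  have hfc : HasCompactSupport fun x ↦ (groundProfile a δ (‖x‖ ^ 2))⁻¹ • ψ x :=
    hψc.mono fun x hx h ↦ hx (by simp [h])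
  exact regularized_hardy_gap b hn ha hA.continuous hδ (hf.of_le one_le_two) hfc
    (hpoincare δ hδ hδ1 _ hf hfc) (funext fun x ↦ (smul_inv_smul₀ (hφ x) (ψ x)).symm)

end HardyGap

section LsForm

theorem magneticTensor_scaled {E : Type*} [NormedAddCommGroup E] [InnerProductSpace ℝ E]
    {A : E → E} (hA : Differentiable ℝ A) (c : ℝ) (x v w : E) :
    magneticTensor (fun y ↦ c • A (c • y)) x v w = c ^ 2 * magneticTensor A (c • x) v w := by
  have hAc : DifferentiableAt ℝ (fun y ↦ A (c • y)) x := by fun_prop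
  simp only [magneticTensor, fderiv_fun_const_smul hAc, fderiv_comp_smul, smul_apply,
    real_inner_smul_left]
  ring

theorem integral_norm_sq_pos {X : Type*} [TopologicalSpace X] [MeasurableSpace X]
    [OpensMeasurableSpace X] {μ : Measure X} [IsFiniteMeasureOnCompacts μ] [μ.IsOpenPosMeasure]
    {ψ : X → ℂ} (hψ : Continuous ψ) (hψc : HasCompactSupport ψ) (hψ0 : ψ ≠ 0) :
    0 < ∫ x, ‖ψ x‖ ^ 2 ∂μ := by
  obtain ⟨x, hx⟩ := Function.ne_iff.1 hψ0
  exact (hψ.norm.pow 2).integral_pos_of_hasCompactSupport_nonneg_nonzero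
    (hasCompactSupport_norm_sq hψc) (fun _ ↦ sq_nonneg _)
    (pow_ne_zero 2 (norm_ne_zero_iff.2 hx))

theorem exists_contDiff_hasCompactSupport_ne_zero (E : Type*) [NormedAddCommGroup E]
    [NormedSpace ℝ E] [FiniteDimensional ℝ E] :
    ∃ ψ : E → ℂ, ContDiff ℝ (⊤ : ℕ∞) ψ ∧ HasCompactSupport ψ ∧ ψ ≠ 0 := by
  obtain ⟨χ, -, hχc, hχ, -, hχ0⟩ :=
    exists_contDiff_tsupport_subset (Filter.univ_mem : Set.univ ∈ nhds (0 : E))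
  exact ⟨fun y ↦ (χ y : ℂ), Complex.ofRealCLM.contDiff.comp hχ,
    hχc.comp_left (g := Complex.ofReal) Complex.ofReal_zero,
    Function.ne_iff.2 ⟨0, Complex.ofReal_ne_zero.2 (hχ0 ▸ one_ne_zero)⟩⟩

variable {d : ℕ} {A : EuclideanSpace ℝ (Fin d) → EuclideanSpace ℝ (Fin d)}

theorem magneticTensor_single {x : EuclideanSpace ℝ (Fin d)} (hA : DifferentiableAt ℝ A x)
    (j k : Fin d) :
    magneticTensor A x (EuclideanSpace.single j 1) (EuclideanSpace.single k 1)
      = fderiv ℝ (fun y ↦ A y k) x (EuclideanSpace.single j 1)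
        - fderiv ℝ (fun y ↦ A y j) x (EuclideanSpace.single k 1) := by
  have hcoord (i : Fin d) (u : EuclideanSpace ℝ (Fin d)) :
      fderiv ℝ (fun y ↦ A y i) x u = fderiv ℝ A x u i := by
    change fderiv ℝ (EuclideanSpace.proj i ∘ A) x u = _
    rw [((EuclideanSpace.proj (𝕜 := ℝ) i).hasFDerivAt.comp x hA.hasFDerivAt).fderiv]
    rfl
  simp [magneticTensor, hcoord, EuclideanSpace.inner_single_right]

theorem lsForm_eq (A : EuclideanSpace ℝ (Fin d) → EuclideanSpace ℝ (Fin d)) (s : ℝ)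
    (ψ : EuclideanSpace ℝ (Fin d) → ℂ) :
    lsForm d A s ψ
      = (∫ y, frobeniusSq (EuclideanSpace.basisFun (Fin d) ℝ)
          (magneticDeriv (fun y ↦ exp (s / 2) • A (exp (s / 2) • y)) ψ y))
        - (((d : ℝ) - 2) / 2) ^ 2 * (∫ y, ‖ψ y‖ ^ 2 / ‖y‖ ^ 2)
        + 1 / 16 * ∫ y, ‖y‖ ^ 2 * ‖ψ y‖ ^ 2 := by
  simp only [lsForm, frobeniusSq, magneticDeriv_apply, EuclideanSpace.basisFun_apply,
    EuclideanSpace.inner_single_right, PiLp.smul_apply, smul_eq_mul, Complex.real_smul,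
    conj_trivial, one_mul, mul_left_comm (Complex.ofReal _) Complex.I, mul_assoc]

theorem exists_lsForm_gap (hd : 2 ≤ d) (hA : ContDiff ℝ 1 A)
    {x v w : EuclideanSpace ℝ (Fin d)} (hB : magneticTensor A x v w ≠ 0) (s : ℝ) :
    ∃ ε, 0 < ε ∧ ∀ ψ : EuclideanSpace ℝ (Fin d) → ℂ, ContDiff ℝ 2 ψ → HasCompactSupport ψ →
      (1 / 2 + ε) * ∫ y, ‖ψ y‖ ^ 2 ≤ lsForm d A s ψ := by
  have hd' : (2 : ℝ) ≤ d := by exact_mod_cast hd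
  have hAs : ContDiff ℝ 1 fun y ↦ exp (s / 2) • A (exp (s / 2) • y) :=
    (hA.comp (contDiff_const_smul _)).const_smul _
  have hBs : magneticTensor (fun y ↦ exp (s / 2) • A (exp (s / 2) • y))
      ((exp (s / 2))⁻¹ • x) v w ≠ 0 := by
    rw [magneticTensor_scaled (hA.differentiable one_ne_zero), smul_inv_smul₀ (exp_ne_zero _)]
    exact mul_ne_zero (pow_ne_zero 2 (exp_ne_zero _)) hB
  simp only [lsForm_eq]
  exact exists_magnetic_hardy_gap volume (EuclideanSpace.basisFun (Fin d) ℝ)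
    (by rw [finrank_euclideanSpace_fin]; ring) (by linarith) hAs hBs

end LsForm

theorem stmt15_general (d : ℕ) (A : EuclideanSpace ℝ (Fin d) → EuclideanSpace ℝ (Fin d))
    (hA : ContDiff ℝ 1 A)
    (hBne : ∃ (x : EuclideanSpace ℝ (Fin d)) (j k : Fin d),
      fderiv ℝ (fun y ↦ A y k) x (EuclideanSpace.single j (1 : ℝ))
        - fderiv ℝ (fun y ↦ A y j) x (EuclideanSpace.single k (1 : ℝ)) ≠ 0)
    (s : ℝ) :
    (1 / 2 : ℝ) < sInf {q : ℝ | ∃ ψ : EuclideanSpace ℝ (Fin d) → ℂ,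
      ContDiff ℝ (⊤ : ℕ∞) ψ ∧ HasCompactSupport ψ ∧ ψ ≠ 0 ∧
      q = lsForm d A s ψ / ∫ y, ‖ψ y‖ ^ 2} := by
  obtain ⟨x, j, k, hB⟩ := hBne
  have hjk : j ≠ k := fun h ↦ hB (h ▸ sub_self _)
  have hd : 2 ≤ d :=
    Nat.succ_le_of_lt (Fintype.card_fin d ▸ Fintype.one_lt_card_iff.2 ⟨j, k, hjk⟩)
  rw [← magneticTensor_single (hA.differentiable one_ne_zero x)] at hB
  obtain ⟨ε, hε, hgap⟩ := exists_lsForm_gap hd hA hB s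
  refine (lt_add_of_pos_right _ hε).trans_le (le_csInf ?_ ?_)
  · obtain ⟨ψ, hψ, hψc, hψ0⟩ :=
      exists_contDiff_hasCompactSupport_ne_zero (EuclideanSpace ℝ (Fin d))
    exact ⟨_, ψ, hψ, hψc, hψ0, rfl⟩
  · rintro q ⟨ψ, hψ, hψc, hψ0, rfl⟩
    rw [le_div_iff₀ (integral_norm_sq_pos hψ.continuous hψc hψ0)]
    exact hgap ψ (hψ.of_le (WithTop.coe_le_coe.2 le_top)) hψc

theorem stmt15 (d : ℕ) (hd : 2 ≤ d)
    (A : EuclideanSpace ℝ (Fin d) → EuclideanSpace ℝ (Fin d))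
    (hA : ContDiff ℝ (⊤ : ℕ∞) A) (hAbd : ∃ M : ℝ, ∀ x, ‖A x‖ ≤ M)
    (hBne : ∃ (x : EuclideanSpace ℝ (Fin d)) (j k : Fin d),
      fderiv ℝ (fun y => A y k) x (EuclideanSpace.single j (1:ℝ))
      - fderiv ℝ (fun y => A y j) x (EuclideanSpace.single k (1:ℝ)) ≠ 0)
    (s : ℝ) (hs : 0 ≤ s) :
    (1/2 : ℝ) < sInf {q : ℝ | ∃ ψ : EuclideanSpace ℝ (Fin d) → ℂ,
      ContDiff ℝ (⊤ : ℕ∞) ψ ∧ HasCompactSupport ψ ∧ ψ ≠ 0 ∧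
      q = lsForm d A s ψ / ∫ y, ‖ψ y‖^2} :=
  stmt15_general d A (hA.of_le (by exact_mod_cast le_top)) hBne s
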